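/- Let k be a field and P a poset that is both directed (any two elements have a common upper bound) and codirected (any two elements have a common lower bound). Let M be a pointwise finite-dimensional persistence module over P with M_p ≠ 0 for all p ∈ P, such that the structure map M_p → M_q is surjective for all p ≤ q. Then M has a direct summand isomorphic to the constant module k_P. -/

import Mathlib

namespace PMod

variable (k : Type) [Field k]

/-- A persistence module over a preordered set `P` with values in `k`-vector spaces. -/
structure PersistenceModule (P : Type) [Preorder P] where
  V : P → Type
  [addCommGroup : ∀ x, AddCommGroup (V x)]
  [module : ∀ x, Module k (V x)]
  map : ∀ {x y : P}, x ≤ y → (V x →ₗ[k] V y)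
  map_refl : ∀ x : P, map (le_refl x) = LinearMap.id
  map_trans : ∀ {x y z : P} (hxy : x ≤ y) (hyz : y ≤ z),
      map (le_trans hxy hyz) = (map hyz).comp (map hxy)

attribute [instance] PersistenceModule.addCommGroup PersistenceModule.module

variable {k}

/-- A morphism of persistence modules. -/
structure Hom {P : Type} [Preorder P] (M N : PersistenceModule k P) where
  app : ∀ x, M.V x →ₗ[k] N.V x
  natural : ∀ {x y : P} (h : x ≤ y), (N.map h).comp (app x) = (app y).comp (M.map h)

/-- A morphism of persistence modules is an isomorphism iff it is pointwise bijective. -/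
def IsIsoHom {P : Type} [Preorder P] {M N : PersistenceModule k P} (f : Hom M N) : Prop :=
  ∀ x, Function.Bijective (f.app x)

/-- Two persistence modules are isomorphic if there is a pointwise bijective
morphism between them. -/
def Isomorphic {P : Type} [Preorder P] (M N : PersistenceModule k P) : Prop :=
  ∃ f : Hom M N, IsIsoHom f

/-- The direct sum of a family of persistence modules, taken pointwise
(`Π₀` is the finitely supported product, i.e. the direct sum). -/
noncomputable def directSum {P : Type} [Preorder P] {ι : Type}
    (N : ι → PersistenceModule k P) : PersistenceModule k P where
  V x := Π₀ i, (N i).V x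
  map {x y} h := DFinsupp.mapRange.linearMap (fun i => (N i).map h)
  map_refl x := by
    have h : (fun i => (N i).map (le_refl x)) =
        fun i => (LinearMap.id : (N i).V x →ₗ[k] (N i).V x) :=
      funext fun i => (N i).map_refl x
    rw [h]
    exact DFinsupp.mapRange.linearMap_id
  map_trans {x y z} hxy hyz := by
    have h : (fun i => (N i).map (le_trans hxy hyz)) =
        fun i => ((N i).map hyz).comp ((N i).map hxy) :=
      funext fun i => (N i).map_trans hxy hyz
    rw [h]
    exact DFinsupp.mapRange.linearMap_comp _ _

/-- The binary direct sum of two persistence modules, taken pointwise. -/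
def sum2 {P : Type} [Preorder P] (M N : PersistenceModule k P) : PersistenceModule k P where
  V x := M.V x × N.V x
  map h := (M.map h).prodMap (N.map h)
  map_refl x := by
    rw [M.map_refl, N.map_refl]
    exact LinearMap.prodMap_id
  map_trans hxy hyz := by
    rw [M.map_trans hxy hyz, N.map_trans hxy hyz]
    exact (LinearMap.prodMap_comp _ _ _ _).symm

/-- The zero persistence module predicate. -/
def IsZero {P : Type} [Preorder P] (M : PersistenceModule k P) : Prop :=
  ∀ x, ∀ v : M.V x, v = 0

/-- A persistence module is indecomposable if it is nonzero and whenever it is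
isomorphic to a direct sum of two modules, one of the summands is zero. -/
def Indecomposable {P : Type} [Preorder P] (M : PersistenceModule k P) : Prop :=
  ¬ IsZero M ∧ ∀ M' M'' : PersistenceModule k P,
    Isomorphic M (sum2 M' M'') → IsZero M' ∨ IsZero M''

variable (k)

/-- A subset of a preordered set is convex. -/
def IsConvex {P : Type} [Preorder P] (I : Set P) : Prop :=
  ∀ p q r : P, p ≤ q → q ≤ r → p ∈ I → r ∈ I → q ∈ I

open Classical in
/-- The fibre of the interval module `k_I` at `x`: a copy of `k` if `x ∈ I`, else `0`. -/
noncomputable def kMod {P : Type} [Preorder P] (I : Set P) (x : P) : Submodule k k :=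
  if x ∈ I then ⊤ else ⊥

/-- The canonical generator of the fibre of the interval module at a point of `I`. -/
noncomputable def kGen {P : Type} [Preorder P] {I : Set P} {x : P} (hx : x ∈ I) :
    kMod k I x :=
  ⟨1, by simp [kMod, hx]⟩

open Classical in
/-- The structure maps of the interval module. -/
noncomputable def intervalMap {P : Type} [Preorder P] (I : Set P) {x y : P} (_ : x ≤ y) :
    kMod k I x →ₗ[k] kMod k I y where
  toFun m := if hy : y ∈ I then ⟨(m : k), by simp [kMod, hy]⟩ else 0
  map_add' a b := by
    by_cases hy : y ∈ I <;> simp [hy]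
  map_smul' c a := by
    by_cases hy : y ∈ I <;> simp [hy]

theorem kMod_coe_eq_zero {P : Type} [Preorder P] {I : Set P} {x : P} (hx : x ∉ I)
    (m : kMod k I x) : (m : k) = 0 := by
  have hm := m.2
  simp only [kMod, if_neg hx, Submodule.mem_bot] at hm
  exact hm

/-- The interval module `k_I` of a convex subset `I ⊆ P`: one-dimensional with
identity structure maps on `I`, and zero outside of `I`. -/
noncomputable def intervalModule {P : Type} [Preorder P] (I : Set P) (hI : IsConvex I) :
    PersistenceModule k P where
  V x := kMod k I x
  map h := intervalMap k I h
  map_refl x := by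
    ext m
    by_cases hx : x ∈ I
    · simp [intervalMap, hx]
    · simp [intervalMap, hx, kMod_coe_eq_zero k hx m]
  map_trans {x y z} hxy hyz := by
    ext m
    by_cases hz : z ∈ I
    · by_cases hy : y ∈ I
      · simp [intervalMap, hz, hy]
      · have hx : x ∉ I := fun hx => hy (hI x y z hxy hyz hx hz)
        simp [intervalMap, hz, hy, kMod_coe_eq_zero k hx m]
    · by_cases hy : y ∈ I <;> simp [intervalMap, hz, hy]

/-- The constant persistence module `k_P` with value `k` everywhere. -/
def constModule (P : Type) [Preorder P] : PersistenceModule k P where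
  V _ := k
  map _ := LinearMap.id
  map_refl _ := rfl
  map_trans _ _ := rfl

variable {k}

/-- Connectedness of a subset of a preordered set: any two points are joined by
a finite zigzag of comparable points inside the subset. -/
def IsConn {P : Type} [Preorder P] (I : Set P) : Prop :=
  ∀ p ∈ I, ∀ q ∈ I, ∃ (n : ℕ) (r : ℕ → P), r 0 = p ∧ r n = q ∧ (∀ i ≤ n, r i ∈ I) ∧
    ∀ i < n, r i ≤ r (i + 1) ∨ r (i + 1) ≤ r i

/-- An interval in a poset: a nonempty convex connected subset. -/
def IsInterval {P : Type} [Preorder P] (I : Set P) : Prop :=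
  I.Nonempty ∧ IsConvex I ∧ IsConn I

/-- An ideal: a subset closed under going down. -/
def IsIdeal {P : Type} [Preorder P] (I : Set P) : Prop :=
  ∀ p q : P, p ≤ q → q ∈ I → p ∈ I

/-- A filter: a subset closed under going up. -/
def IsFilter {P : Type} [Preorder P] (I : Set P) : Prop :=
  ∀ p q : P, p ≤ q → p ∈ I → q ∈ I

/-- An interval in a totally ordered set: a nonempty convex subset. -/
def IsIntervalLin {P : Type} [Preorder P] (I : Set P) : Prop :=
  I.Nonempty ∧ IsConvex I

theorem IsConvex.prod {S T : Type} [Preorder S] [Preorder T] {A : Set S} {B : Set T}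
    (hA : IsConvex A) (hB : IsConvex B) : IsConvex (A ×ˢ B) := by
  intro p q r hpq hqr hp hr
  exact ⟨hA _ _ _ hpq.1 hqr.1 hp.1 hr.1, hB _ _ _ hpq.2 hqr.2 hp.2 hr.2⟩

theorem isConvex_univ {P : Type} [Preorder P] : IsConvex (Set.univ : Set P) :=
  fun _ _ _ _ _ _ _ => trivial

/-- A block in the product of two totally ordered sets. -/
def IsBlock {S T : Type} [LinearOrder S] [LinearOrder T] (I : Set (S × T)) : Prop :=
  I.Nonempty ∧ (
    (∃ JS JT, IsIntervalLin JS ∧ IsIdeal JS ∧ IsIntervalLin JT ∧ IsIdeal JT ∧ I = JS ×ˢ JT) ∨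
    (∃ JS JT, IsIntervalLin JS ∧ IsFilter JS ∧ IsIntervalLin JT ∧ IsFilter JT ∧ I = JS ×ˢ JT) ∨
    (∃ JS, IsIntervalLin JS ∧ I = JS ×ˢ (Set.univ : Set T)) ∨
    (∃ JT, IsIntervalLin JT ∧ I = (Set.univ : Set S) ×ˢ JT))

theorem IsBlock.isConvex {S T : Type} [LinearOrder S] [LinearOrder T] {I : Set (S × T)}
    (h : IsBlock I) : IsConvex I := by
  obtain ⟨-, h | h | h | h⟩ := h
  · obtain ⟨JS, JT, hS, -, hT, -, rfl⟩ := h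
    exact hS.2.prod hT.2
  · obtain ⟨JS, JT, hS, -, hT, -, rfl⟩ := h
    exact hS.2.prod hT.2
  · obtain ⟨JS, hS, rfl⟩ := h
    exact hS.2.prod isConvex_univ
  · obtain ⟨JT, hT, rfl⟩ := h
    exact isConvex_univ.prod hT.2

/-- Convexity is inherited by preimages in a subposet. -/
theorem IsConvex.preimage {P : Type} [Preorder P] {J : Set P} (hJ : IsConvex J)
    (Q : Set P) : IsConvex {p : Q | (p : P) ∈ J} :=
  fun p q r hpq hqr hp hr => hJ p q r hpq hqr hp hr

/-- The restriction of a persistence module to a subposet. -/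
def restrict {P : Type} [Preorder P] (M : PersistenceModule k P) (Q : Set P) :
    PersistenceModule k Q where
  V q := M.V q
  map h := M.map h
  map_refl q := M.map_refl q
  map_trans hxy hyz := M.map_trans hxy hyz

/-- Middle exactness for persistence modules over a product of two totally ordered sets:
for every rectangle `a = (x,y) ≤ b = (x,y'), c = (x',y) ≤ d = (x',y')` the sequence
`M_a → M_b ⊕ M_c → M_d` is exact at `M_b ⊕ M_c`. -/
def MiddleExact {S T : Type} [Preorder S] [Preorder T]
    (M : PersistenceModule k (S × T)) : Prop :=
  ∀ (x x' : S) (y y' : T) (hx : x ≤ x') (hy : y ≤ y')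
    (mb : M.V (x, y')) (mc : M.V (x', y)),
    M.map (show (x, y') ≤ (x', y') from ⟨hx, le_refl y'⟩) mb =
      M.map (show (x', y) ≤ (x', y') from ⟨le_refl x', hy⟩) mc →
    ∃ ma : M.V (x, y),
      M.map (show (x, y) ≤ (x, y') from ⟨le_refl x, hy⟩) ma = mb ∧
      M.map (show (x, y) ≤ (x', y) from ⟨hx, le_refl y⟩) ma = mc


theorem IsIdeal.isConvex {P : Type} [Preorder P] {I : Set P} (h : IsIdeal I) : IsConvex I :=
  fun _ q r _ hqr _ hr => h q r hqr hr

theorem IsFilter.isConvex {P : Type} [Preorder P] {I : Set P} (h : IsFilter I) : IsConvex I :=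
  fun p q _ hpq _ hp _ => h p q hpq hp


/-- Convexity of the preimage of a convex subset of `T` in a subposet of `S × T`. -/
theorem IsConvex.preimageSnd {S T : Type} [Preorder S] [Preorder T] {J : Set T}
    (hJ : IsConvex J) (Q : Set (S × T)) : IsConvex {p : ↥Q | (p : S × T).2 ∈ J} :=
  fun p q r hpq hqr hp hr =>
    hJ _ _ _ (Subtype.coe_le_coe.mpr hpq).2 (Subtype.coe_le_coe.mpr hqr).2 hp hr

end PMod

/-!
A module `M` has the constant module as a summand as soon as there are morphisms `k_P → M → k_P`
composing to the identity, that is, a compatible family of vectors and a compatible family of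
functionals pairing to `1`; over a directed order it suffices to check the pairing at one point.
Choose `q` with `dim M_q` minimal, so that all structure maps out of `M_q` are bijective. Then `M_q`
embeds into `colim M`, and a functional on `M_q` extends to `colim M`, giving a morphism `M → k_P`.
Dually, `M* : Pᵒᵈ → Vec_k` has injective structure maps, so the functional on `M_q*` given by a
vector `v` extends to a morphism `M* → k`, which is a morphism `k_P → M` because the fibres are
finite-dimensional.
-/

namespace PMod

variable {k : Type} [Field k] {P : Type} [Preorder P] {L M N : PersistenceModule k P}

namespace Hom

theorem map_app (f : Hom M N) {x y : P} (h : x ≤ y) (v : M.V x) :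
    N.map h (f.app x v) = f.app y (M.map h v) :=
  LinearMap.congr_fun (f.natural h) v

/-- The composition of two morphisms of persistence modules. -/
def comp (g : Hom M N) (f : Hom L M) : Hom L N where
  app p := g.app p ∘ₗ f.app p
  natural h := by
    ext v
    simp only [LinearMap.comp_apply, map_app]

/-- The kernel of a morphism of persistence modules, computed pointwise. -/
def ker (f : Hom M N) : PersistenceModule k P where
  V p := LinearMap.ker (f.app p)
  map {x y} h := (M.map h).restrict fun v (hv : f.app x v = 0) =>
    show f.app y (M.map h v) = 0 by rw [← f.map_app h, hv, map_zero]
  map_refl x := by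
    ext v
    exact LinearMap.congr_fun (M.map_refl x) v
  map_trans hxy hyz := by
    ext v
    exact LinearMap.congr_fun (M.map_trans hxy hyz) v

/-- The complementary projection `v ↦ v - ι (π v)` onto the kernel of a morphism `π` with
section `ι`. -/
def kerProjection (ι : Hom N M) (π : Hom M N) (h : ∀ p, π.app p ∘ₗ ι.app p = LinearMap.id) :
    Hom M π.ker where
  app p := LinearMap.codRestrict (LinearMap.ker (π.app p)) (LinearMap.id - ι.app p ∘ₗ π.app p) <| by
    intro v
    have hv : π.app p (ι.app p (π.app p v)) = π.app p v := LinearMap.congr_fun (h p) _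
    rw [LinearMap.mem_ker, LinearMap.sub_apply, map_sub, LinearMap.id_apply,
      LinearMap.comp_apply, hv, sub_self]
  natural {x y} hxy := by
    refine LinearMap.ext fun v => Subtype.ext ?_
    change M.map hxy (v - ι.app x (π.app x v)) = M.map hxy v - ι.app y (π.app y (M.map hxy v))
    rw [map_sub, map_app, map_app]

/-- The morphism into a direct sum with the given components. -/
def prod (f : Hom L M) (g : Hom L N) : Hom L (sum2 M N) where
  app p := (f.app p).prod (g.app p)
  natural h := LinearMap.ext fun v => Prod.ext (f.map_app h v) (g.map_app h v)

theorem isIsoHom_prod_kerProjection (ι : Hom N M) (π : Hom M N)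
    (h : ∀ p, π.app p ∘ₗ ι.app p = LinearMap.id) : IsIsoHom (π.prod (kerProjection ι π h)) := by
  intro p
  refine Function.bijective_iff_has_inverse.2
    ⟨fun w : N.V p × LinearMap.ker (π.app p) => ι.app p w.1 + w.2, fun v => ?_, ?_⟩
  · exact add_sub_cancel (ι.app p (π.app p v)) v
  · rintro ⟨n, w, hw : π.app p w = 0⟩
    have hn : π.app p (ι.app p n + w) = n := by
      rw [map_add, hw, add_zero]
      exact LinearMap.congr_fun (h p) n
    refine Prod.ext hn (Subtype.ext ?_)
    change ι.app p n + w - ι.app p (π.app p (ι.app p n + w)) = w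
    rw [hn, add_sub_cancel_left]

theorem app_constModule_eq [IsDirectedOrder P] (f : Hom (constModule k P) (constModule k P))
    (p q : P) : f.app p = f.app q := by
  obtain ⟨c, hpc, hqc⟩ := exists_ge_ge p q
  exact (f.natural hpc).trans (f.natural hqc).symm

end Hom

namespace PersistenceModule

/-- The pointwise dual of a persistence module, which lives over the opposite order. -/
def dual (M : PersistenceModule k P) : PersistenceModule k Pᵒᵈ where
  V p := Module.Dual k (M.V p.ofDual)
  map {x y} h := (M.map (x := y.ofDual) (y := x.ofDual) h).dualMap
  map_refl x := by rw [M.map_refl, LinearMap.dualMap_id]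
  map_trans {x y z} hxy hyz := by
    rw [M.map_trans (x := z.ofDual) (y := y.ofDual) (z := x.ofDual) hyz hxy,
      LinearMap.dualMap_comp_dualMap]

instance directedSystem (M : PersistenceModule k P) :
    DirectedSystem M.V (fun _ _ h => M.map h) where
  map_self p v := LinearMap.congr_fun (M.map_refl p) v
  map_map _ _ _ hxy hyz v := (LinearMap.congr_fun (M.map_trans hxy hyz) v).symm

theorem exists_forall_injective_map [Nonempty P] (M : PersistenceModule k P)
    [∀ p, FiniteDimensional k (M.V p)]
    (hM : ∀ (p q : P) (h : p ≤ q), Function.Surjective (M.map h)) :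
    ∃ q, ∀ (p : P) (h : q ≤ p), Function.Injective (M.map h) := by
  let dim (p : P) := Module.finrank k (M.V p)
  let q := Function.argmin dim
  refine ⟨q, fun p h => ?_⟩
  have hdim : dim q = dim p := le_antisymm (Function.argmin_le dim p)
    (LinearMap.finrank_le_finrank_of_surjective (hM q p h))
  exact (LinearMap.injective_iff_surjective_of_finrank_eq_finrank hdim).2 (hM q p h)

open scoped Classical in
theorem exists_hom_constModule_app_eq [IsDirectedOrder P] (M : PersistenceModule k P) {q : P}
    (hq : ∀ (p : P) (h : q ≤ p), Function.Injective (M.map h)) (g : Module.Dual k (M.V q)) :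
    ∃ π : Hom M (constModule k P), π.app q = g := by
  let toColimit := Module.DirectLimit.of k P M.V fun _ _ h => M.map h
  have toColimit_injective : Function.Injective (toColimit q) := fun v w hvw =>
    let ⟨p, hqp, hp⟩ := Module.DirectLimit.exists_eq_of_of_eq hvw
    hq p hqp hp
  obtain ⟨G, hG⟩ := LinearMap.dualMap_surjective_of_injective toColimit_injective g
  refine ⟨⟨fun p => G ∘ₗ toColimit p, fun h => LinearMap.ext fun v => ?_⟩, hG⟩
  exact congrArg G Module.DirectLimit.of_f.symm

end PersistenceModule

namespace Hom

variable [∀ p, FiniteDimensional k (M.V p)]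

/-- The vector of `M_p` whose evaluation functional is the component at `p` of a morphism
`M* → k`. -/
noncomputable def predualVector (f : Hom M.dual (constModule k Pᵒᵈ)) (p : P) : M.V p :=
  (Module.evalEquiv k (M.V p)).symm (f.app (OrderDual.toDual p))

theorem apply_predualVector (f : Hom M.dual (constModule k Pᵒᵈ)) (p : P)
    (a : Module.Dual k (M.V p)) : a (f.predualVector p) = f.app (OrderDual.toDual p) a :=
  Module.apply_evalEquiv_symm_apply k (M.V p) a (f.app (OrderDual.toDual p))

theorem map_predualVector (f : Hom M.dual (constModule k Pᵒᵈ)) {x y : P} (h : x ≤ y) :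
    M.map h (f.predualVector x) = f.predualVector y := by
  refine (Module.evalEquiv k (M.V y)).injective (LinearMap.ext fun a => ?_)
  have h_natural : f.app (OrderDual.toDual x) (a ∘ₗ M.map h) = f.app (OrderDual.toDual y) a :=
    (f.map_app (OrderDual.toDual_le_toDual.2 h) a).symm
  exact (f.apply_predualVector x (a ∘ₗ M.map h)).trans
    (h_natural.trans (f.apply_predualVector y a).symm)

end Hom

theorem PersistenceModule.exists_constModule_hom_app_one_eq [IsCodirectedOrder P]
    (M : PersistenceModule k P) [∀ p, FiniteDimensional k (M.V p)] {q : P}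
    (hq : ∀ (p : P) (h : p ≤ q), Function.Surjective (M.map h)) (v : M.V q) :
    ∃ ι : Hom (constModule k P) M, ι.app q (1 : k) = v := by
  obtain ⟨f, hf⟩ := M.dual.exists_hom_constModule_app_eq (q := OrderDual.toDual q)
    (fun p h => LinearMap.dualMap_injective_of_surjective (hq p.ofDual h))
    (Module.evalEquiv k (M.V q) v)
  refine ⟨⟨fun p => LinearMap.toSpanSingleton k (M.V p) (f.predualVector p), fun h => ?_⟩, ?_⟩
  · exact (LinearMap.comp_toSpanSingleton _ _).trans
      (congrArg (LinearMap.toSpanSingleton k _) (f.map_predualVector h))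
  · calc (1 : k) • f.predualVector q
        = (Module.evalEquiv k (M.V q)).symm (Module.evalEquiv k (M.V q) v) := by
          rw [one_smul, Hom.predualVector, hf]
      _ = v := LinearEquiv.symm_apply_apply _ v

end PMod

open PMod in
theorem stmt7_general {k : Type} [Field k] {P : Type} [Preorder P]
    [IsDirectedOrder P] [IsCodirectedOrder P] (M : PersistenceModule k P)
    [∀ p, FiniteDimensional k (M.V p)] (hne : ∀ p, ∃ v : M.V p, v ≠ 0)
    (hsurj : ∀ (p q : P) (h : p ≤ q), Function.Surjective (M.map h)) :
    ∃ M'' : PersistenceModule k P, Isomorphic M (sum2 (constModule k P) M'') := by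
  rcases isEmpty_or_nonempty P with hP | hP
  · exact ⟨M, ⟨hP.elim, fun {p} => hP.elim p⟩, hP.elim⟩
  obtain ⟨q, hq⟩ := M.exists_forall_injective_map hsurj
  obtain ⟨v, hv⟩ := hne q
  obtain ⟨g, hgv⟩ := Module.Projective.exists_dual_eq_one k hv
  obtain ⟨π, rfl⟩ := M.exists_hom_constModule_app_eq hq g
  obtain ⟨ι, rfl⟩ := M.exists_constModule_hom_app_one_eq (fun p h => hsurj p q h) v
  have hq_id : (π.comp ι).app q = LinearMap.id := LinearMap.ext_ring hgv
  have h_id (p : P) : π.app p ∘ₗ ι.app p = LinearMap.id :=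
    ((π.comp ι).app_constModule_eq p q).trans hq_id
  exact ⟨π.ker, _, Hom.isIsoHom_prod_kerProjection ι π h_id⟩

open PMod in
/-- Lemma 2.3: over a directed and codirected poset, a pointwise finite-dimensional
module with everywhere nonzero fibres and surjective structure maps has the constant
module as a direct summand. -/
theorem stmt7 {k : Type} [Field k] {P : Type} [PartialOrder P]
    (hdir : ∀ p q : P, ∃ c, p ≤ c ∧ q ≤ c)
    (hcodir : ∀ p q : P, ∃ c, c ≤ p ∧ c ≤ q)
    (M : PersistenceModule k P)
    (hfd : ∀ p, FiniteDimensional k (M.V p))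
    (hne : ∀ p, ∃ v : M.V p, v ≠ 0)
    (hsurj : ∀ (p q : P) (h : p ≤ q), Function.Surjective (M.map h)) :
    ∃ M'' : PersistenceModule k P,
      Isomorphic M (sum2 (constModule k P) M'') := by
  have : IsDirectedOrder P := ⟨hdir⟩
  have : IsCodirectedOrder P := ⟨hcodir⟩
  exact stmt7_general M hne hsurj
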